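/- arXiv:1803.02012 — 6 statements merged into one kernel-verified Lean document; each statement's English description precedes it below -/
import Mathlib

section
/- Let Q be a probability measure on a measurable space Ω, W : Ω → ℝ a measurable function, and α₀ ∈ (0,1). Let c := sInf {s ∈ ℝ | Q{ω | W ω ≤ s} ≥ 1 − α₀} be the lower (1−α₀)-quantile of W, and define κ := 0 if Q{W = c} = 0, and κ := (α₀ − Q{W > c}) / Q{W = c} otherwise (all measure values taken as reals). Then κ ∈ [0,1], and the [0,1]-valued function ψ♯ := 1_{W > c} + κ · 1_{W = c} satisfies ∫ ψ♯ dQ = α₀. -/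
open MeasureTheory

/-- Lemma A.5: the randomized threshold test `ψ♯ = 1_{W > c} + κ·1_{W = c}` built from
the lower `(1-α₀)`-quantile `c` of `W` satisfies `κ ∈ [0,1]`, is `[0,1]`-valued, and has
expectation `α₀` under `Q`. -/
theorem randomized_test {Ω : Type*} [MeasurableSpace Ω]
    (Q : Measure Ω) [IsProbabilityMeasure Q]
    (W : Ω → ℝ) (hW : Measurable W) (α₀ : ℝ) (hα₀ : α₀ ∈ Set.Ioo (0:ℝ) 1)
    (c : ℝ) (hc : c = sInf {s : ℝ | 1 - α₀ ≤ (Q {ω | W ω ≤ s}).toReal})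
    (κ : ℝ)
    (hκ : κ = if (Q {ω | W ω = c}).toReal = 0 then 0
              else (α₀ - (Q {ω | W ω > c}).toReal) / (Q {ω | W ω = c}).toReal)
    (ψ : Ω → ℝ)
    (hψ : ψ = fun ω => ({ω | W ω > c} : Set Ω).indicator 1 ω
                + κ * ({ω | W ω = c} : Set Ω).indicator 1 ω) :
    κ ∈ Set.Icc (0:ℝ) 1 ∧ (∀ ω, ψ ω ∈ Set.Icc (0:ℝ) 1) ∧ ∫ ω, ψ ω ∂Q = α₀ := by
  obtain ⟨h0, h1⟩ := hα₀
  have hprob : IsProbabilityMeasure (Q.map W) := Measure.isProbabilityMeasure_map hW.aemeasurable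
  set F := ProbabilityTheory.cdf (Q.map W) with hF
  have hFs : ∀ s, (Q {ω | W ω ≤ s}).toReal = F s := by
    intro s
    rw [hF, ProbabilityTheory.cdf_eq_real, Measure.real, Measure.map_apply hW measurableSet_Iic]
    rfl
  have mlt : MeasurableSet {ω | W ω < c} := measurableSet_lt hW measurable_const
  have mgt : MeasurableSet {ω | W ω > c} := measurableSet_lt measurable_const hW
  have meq : MeasurableSet {ω | W ω = c} := hW (measurableSet_singleton c)
  simp only [hFs] at hc
  have hne : {s : ℝ | 1 - α₀ ≤ F s}.Nonempty := by
    have := (ProbabilityTheory.tendsto_cdf_atTop (Q.map W)).eventually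
      (lt_mem_nhds (show 1 - α₀ < 1 by linarith))
    obtain ⟨s, hs⟩ := this.exists
    exact ⟨s, hs.le⟩
  have hbdd : BddBelow {s : ℝ | 1 - α₀ ≤ F s} := by
    have := (ProbabilityTheory.tendsto_cdf_atBot (Q.map W)).eventually
      (gt_mem_nhds (show 0 < 1 - α₀ by linarith))
    obtain ⟨s, hs⟩ := this.exists
    refine ⟨s, fun t ht => ?_⟩
    by_contra hlt
    have h2 : F t ≤ F s := F.mono (not_le.mp hlt).le
    have h3 : 1 - α₀ ≤ F t := ht
    linarith
  have hFc : 1 - α₀ ≤ F c := by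
    have ht : Filter.Tendsto F (nhdsWithin c (Set.Ioi c)) (nhds (F c)) :=
      (F.right_continuous c).mono_left (nhdsWithin_mono _ Set.Ioi_subset_Ici_self)
    refine ge_of_tendsto ht ?_
    filter_upwards [self_mem_nhdsWithin] with s hs
    have hs' : sInf {s : ℝ | 1 - α₀ ≤ F s} < s := hc ▸ hs
    obtain ⟨t, ht, hts⟩ := exists_lt_of_csInf_lt hne hs'
    exact le_trans ht (F.mono hts.le)
  have hl : (Q {ω | W ω < c}).toReal ≤ 1 - α₀ := by
    have ht := F.mono.tendsto_leftLim c
    have hle : Function.leftLim F c ≤ 1 - α₀ := by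
      refine le_of_tendsto ht ?_
      filter_upwards [self_mem_nhdsWithin] with s hs
      by_contra hlt
      have h2 : sInf {s : ℝ | 1 - α₀ ≤ F s} ≤ s := csInf_le hbdd (not_le.mp hlt).le
      rw [← hc] at h2
      exact absurd hs (not_lt.mpr h2)
    have h3 := F.measure_Iio (ProbabilityTheory.tendsto_cdf_atBot (Q.map W)) c
    rw [hF, ProbabilityTheory.measure_cdf, Measure.map_apply hW measurableSet_Iio, ← hF,
      sub_zero] at h3
    change Q {ω | W ω < c} = _ at h3
    rw [h3]
    exact ENNReal.toReal_le_of_le_ofReal (by linarith) (ENNReal.ofReal_le_ofReal hle)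
  have hq : F c = (Q {ω | W ω < c}).toReal + (Q {ω | W ω = c}).toReal := by
    rw [← hFs, ← ENNReal.toReal_add (measure_ne_top _ _) (measure_ne_top _ _),
      ← measure_union _ meq]
    · congr 2
      ext ω
      simp [le_iff_lt_or_eq]
    · rw [Set.disjoint_left]
      intro ω h h'
      exact absurd h' (ne_of_lt h)
  have hp : (Q {ω | W ω > c}).toReal = 1 - F c := by
    have h := probReal_compl_eq_one_sub (μ := Q) (s := {ω | W ω > c}) mgt
    have he : {ω | W ω > c}ᶜ = {ω | W ω ≤ c} := by ext; simp
    rw [he] at h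
    simp only [Measure.real, hFs] at h
    linarith
  have hq0 : 0 ≤ (Q {ω | W ω = c}).toReal := ENNReal.toReal_nonneg
  have hκI : κ ∈ Set.Icc (0:ℝ) 1 := by
    rw [hκ]
    split_ifs with h
    · simp
    · have hpos := lt_of_le_of_ne hq0 (Ne.symm h)
      constructor
      · exact div_nonneg (by linarith) hq0
      · rw [div_le_one hpos]
        linarith
  have hκq : κ * (Q {ω | W ω = c}).toReal = α₀ - (Q {ω | W ω > c}).toReal := by
    rw [hκ]
    split_ifs with h
    · linarith
    · exact div_mul_cancel₀ _ h
  refine ⟨hκI, ?_, ?_⟩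
  · intro ω
    rw [hψ]
    obtain ⟨k0, k1⟩ := hκI
    rcases lt_trichotomy (W ω) c with h | h | h
    · simp [Set.indicator, h.ne, not_lt.mpr h.le]
    · simp [Set.indicator, h, k0, k1]
    · simp [Set.indicator, h, h.ne']
  · rw [hψ, integral_add, integral_const_mul, integral_indicator_one mgt,
      integral_indicator_one meq]
    · simp only [Measure.real]
      linarith
    · exact (integrable_const (1:ℝ)).indicator mgt
    · exact ((integrable_const (1:ℝ)).indicator meq).const_mul κ
end

section
/- (Neyman–Pearson direction.) Let μ be a probability measure on Ω, Z : Ω → ℝ a nonnegative measurable function with ∫ Z dμ = 1, and let ν := μ.withDensity Z (so ν is a probability measure with ν ≪ μ). Suppose ψ⁰ : Ω → ℝ is measurable with 0 ≤ ψ⁰ ≤ 1 and there exists c ∈ [0,∞] (extended nonnegative real) such that ψ⁰ = 1 μ-a.e. on {ω | c · Z ω < 1} and ψ⁰ = 0 μ-a.e. on {ω | c · Z ω > 1} (with the convention ∞ · 0 = 0). Then for every measurable ψ : Ω → ℝ with 0 ≤ ψ ≤ 1: if ∫ ψ dν ≤ ∫ ψ⁰ dν, then ∫ ψ dμ ≤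 ∫ ψ⁰ dμ. -/
open MeasureTheory

/-- Lemma A.6(a) (Neyman–Pearson direction): a threshold test `ψ0` maximizes the
μ-expectation among all `[0,1]`-valued tests with no larger ν-expectation, where
`ν = μ.withDensity Z`. -/
theorem neyman_pearson_direction {Ω : Type*} [MeasurableSpace Ω]
    (μ : Measure Ω) [IsProbabilityMeasure μ]
    (Z : Ω → ℝ) (hZmeas : Measurable Z) (hZnn : ∀ ω, 0 ≤ Z ω)
    (hZint : ∫ ω, Z ω ∂μ = 1)
    (ν : Measure Ω) (hν : ν = μ.withDensity (fun ω => ENNReal.ofReal (Z ω)))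
    (ψ0 : Ω → ℝ) (hψ0meas : Measurable ψ0)
    (hψ001 : ∀ ω, 0 ≤ ψ0 ω ∧ ψ0 ω ≤ 1)
    (c : ENNReal)
    (h1 : ∀ᵐ ω ∂μ, c * ENNReal.ofReal (Z ω) < 1 → ψ0 ω = 1)
    (h0 : ∀ᵐ ω ∂μ, 1 < c * ENNReal.ofReal (Z ω) → ψ0 ω = 0) :
    ∀ ψ : Ω → ℝ, Measurable ψ → (∀ ω, 0 ≤ ψ ω ∧ ψ ω ≤ 1) →
      ∫ ω, ψ ω ∂ν ≤ ∫ ω, ψ0 ω ∂ν → ∫ ω, ψ ω ∂μ ≤ ∫ ω, ψ0 ω ∂μ := by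
  intro ψ hψ hψ01 hle
  have hZi : Integrable Z μ := by
    by_contra h
    rw [integral_undef h] at hZint
    exact zero_ne_one hZint
  have key : ∀ f : Ω → ℝ, ∫ ω, f ω ∂ν = ∫ ω, Z ω * f ω ∂μ := by
    intro f
    rw [hν, integral_withDensity_eq_integral_toReal_smul hZmeas.ennreal_ofReal
      (Filter.Eventually.of_forall fun _ => ENNReal.ofReal_lt_top)]
    simp [ENNReal.toReal_ofReal (hZnn _)]
  have hb : ∀ f : Ω → ℝ, Measurable f → (∀ ω, 0 ≤ f ω ∧ f ω ≤ 1) →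
      Integrable f μ ∧ Integrable (fun ω => Z ω * f ω) μ := by
    intro f hf h01
    have hn : ∀ ω, ‖f ω‖ ≤ 1 := fun ω => by
      rw [Real.norm_eq_abs, abs_of_nonneg (h01 ω).1]; exact (h01 ω).2
    refine ⟨Integrable.of_bound hf.aestronglyMeasurable 1 (Filter.Eventually.of_forall hn), ?_⟩
    refine hZi.mono (hZmeas.mul hf).aestronglyMeasurable (Filter.Eventually.of_forall fun ω => ?_)
    rw [norm_mul]
    exact mul_le_of_le_one_right (norm_nonneg _) (hn ω)
  obtain ⟨i1, i2⟩ := hb ψ hψ hψ01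
  obtain ⟨j1, j2⟩ := hb ψ0 hψ0meas hψ001
  rw [key, key] at hle
  by_cases hc : c = ⊤
  · subst hc
    have hz : ∫ ω, Z ω * ψ0 ω ∂μ = 0 := by
      apply integral_eq_zero_of_ae
      filter_upwards [h0] with ω h
      rcases (hZnn ω).eq_or_lt with hz | hz
      · simp [← hz]
      · have : ψ0 ω = 0 := h (by
          rw [ENNReal.top_mul (ENNReal.ofReal_pos.2 hz).ne']; exact ENNReal.one_lt_top)
        simp [this]
    have hnn : ∀ ω, 0 ≤ Z ω * ψ ω := fun ω => mul_nonneg (hZnn ω) (hψ01 ω).1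
    have hz2 : ∫ ω, Z ω * ψ ω ∂μ = 0 :=
      le_antisymm (hle.trans hz.le) (integral_nonneg hnn)
    have hae := (integral_eq_zero_iff_of_nonneg hnn i2).1 hz2
    apply integral_mono_ae i1 j1
    filter_upwards [h1, hae] with ω h h'
    rcases (hZnn ω).eq_or_lt with hz | hz
    · rw [h (by simp [← hz])]; exact (hψ01 ω).2
    · have : ψ ω = 0 := (mul_eq_zero.1 h').resolve_left hz.ne'
      rw [this]; exact (hψ001 ω).1
  · lift c to NNReal using hc
    have hcz : ∀ ω, (c : ENNReal) * ENNReal.ofReal (Z ω) = ENNReal.ofReal (c * Z ω) := fun ω => by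
      rw [ENNReal.ofReal_mul (NNReal.coe_nonneg c), ENNReal.ofReal_coe_nnreal]
    have hp : ∫ ω, (ψ ω - c * (Z ω * ψ ω)) ∂μ ≤ ∫ ω, (ψ0 ω - c * (Z ω * ψ0 ω)) ∂μ := by
      apply integral_mono_ae (i1.sub (i2.const_mul _)) (j1.sub (j2.const_mul _))
      filter_upwards [h1, h0] with ω h h'
      rw [hcz] at h h'
      change ψ ω - c * (Z ω * ψ ω) ≤ ψ0 ω - c * (Z ω * ψ0 ω)
      have a := hψ01 ω
      rcases lt_trichotomy ((c : ℝ) * Z ω) 1 with hl | hl | hl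
      · rw [h (ENNReal.ofReal_lt_one.2 hl)]
        nlinarith
      · have e : ∀ x : ℝ, (c : ℝ) * (Z ω * x) = x := fun x => by rw [← mul_assoc, hl, one_mul]
        simp [e]
      · rw [h' (ENNReal.one_lt_ofReal.2 hl)]
        nlinarith
    rw [integral_sub i1 (i2.const_mul _), integral_sub j1 (j2.const_mul _),
      integral_const_mul, integral_const_mul] at hp
    have := mul_le_mul_of_nonneg_left hle c.2
    change (c : ℝ) * _ ≤ (c : ℝ) * _ at this
    linarith
end

section
/- (Neyman–Pearson converse.) Let μ be a probability measure on Ω, Z : Ω → ℝ a nonnegative measurable function with ∫ Z dμ = 1, and ν := μ.withDensity Z. Let ψ⁰ : Ω → ℝ be measurable with 0 ≤ ψ⁰ ≤ 1 and suppose that for every measurable ψ : Ω → ℝ with 0 ≤ ψ ≤ 1, the inequality ∫ ψ dν ≤ ∫ ψ⁰ dν implies ∫ ψ dμ ≤ ∫ ψ⁰ dμ. Then there exists c ∈ [0,∞] (extended nonnegative real) such that ψ⁰ = 1 μ-a.e. on {ω | c · Z ω < 1} and ψ⁰ = 0 μ-a.e. on {ω | c · Z ω > 1} (with the convention ∞ ·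 0 = 0). -/
open MeasureTheory


theorem np_swap {Ω : Type*} [MeasurableSpace Ω]
    (μ : Measure Ω) [IsProbabilityMeasure μ]
    (Z : Ω → ℝ) (hZmeas : Measurable Z) (hZnn : ∀ ω, 0 ≤ Z ω)
    (hZi : Integrable Z μ)
    (ψ0 : Ω → ℝ) (hψ0meas : Measurable ψ0)
    (hψ001 : ∀ ω, 0 ≤ ψ0 ω ∧ ψ0 ω ≤ 1)
    (hopt : ∀ ψ : Ω → ℝ, Measurable ψ → (∀ ω, 0 ≤ ψ ω ∧ ψ ω ≤ 1) →
      ∫ ω, Z ω * ψ ω ∂μ ≤ ∫ ω, Z ω * ψ0 ω ∂μ → ∫ ω, ψ ω ∂μ ≤ ∫ ω, ψ0 ω ∂μ)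
    (a b : ℝ) (hab : a < b) (U V : Ω → ℝ)
    (hU : U = {ω | Z ω ≤ a}.indicator (fun ω => 1 - ψ0 ω))
    (hV : V = {ω | b ≤ Z ω}.indicator (fun ω => ψ0 ω))
    (hUi : Integrable U μ) (hVi : Integrable V μ)
    (hUm : Measurable U) (hVm : Measurable V) (e d : ℝ)
    (he0 : 0 ≤ e) (he1 : e ≤ 1) (hd0 : 0 ≤ d) (hd1 : d ≤ 1)
    (h : e * a * ∫ ω, U ω ∂μ ≤ d * b * ∫ ω, V ω ∂μ) :
    e * ∫ ω, U ω ∂μ ≤ d * ∫ ω, V ω ∂μ := by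
  have h0i : Integrable ψ0 μ :=
    Integrable.of_bound hψ0meas.aestronglyMeasurable 1
      (Filter.Eventually.of_forall fun ω => by
        rw [Real.norm_eq_abs, abs_le]; constructor <;> linarith [(hψ001 ω).1, (hψ001 ω).2])
  have hψi : Integrable (fun ω => e * U ω - d * V ω) μ := (hUi.const_mul e).sub (hVi.const_mul d)
  have hψm : Measurable (fun ω => ψ0 ω + (e * U ω - d * V ω)) := by fun_prop
  have hψb : ∀ ω, 0 ≤ ψ0 ω + (e * U ω - d * V ω) ∧ ψ0 ω + (e * U ω - d * V ω) ≤ 1 := by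
    intro ω
    obtain ⟨h1, h2⟩ := hψ001 ω
    by_cases hA : Z ω ≤ a
    · have hB : ¬ b ≤ Z ω := by linarith
      simp only [hU, hV, Set.indicator, Set.mem_ofPred_eq, hA, hB, if_true, if_false]
      constructor <;> nlinarith
    · by_cases hB : b ≤ Z ω
      · simp only [hU, hV, Set.indicator, Set.mem_ofPred_eq, hA, hB, if_true, if_false]
        constructor <;> nlinarith
      · simp only [hU, hV, Set.indicator, Set.mem_ofPred_eq, hA, hB, if_false]
        constructor <;> linarith
  have bi : ∀ ψ : Ω → ℝ, Measurable ψ → (∀ ω, 0 ≤ ψ ω ∧ ψ ω ≤ 1) →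
      Integrable (fun ω => Z ω * ψ ω) μ := by
    intro ψ hm hb
    refine hZi.mono (by fun_prop) (Filter.Eventually.of_forall fun ω => ?_)
    rw [Real.norm_eq_abs, Real.norm_eq_abs, abs_mul, abs_of_nonneg (hb ω).1]
    exact mul_le_of_le_one_right (abs_nonneg _) (hb ω).2
  have hle : ∫ ω, Z ω * (ψ0 ω + (e * U ω - d * V ω)) ∂μ
      ≤ ∫ ω, (Z ω * ψ0 ω + (e * a * U ω - d * b * V ω)) ∂μ := by
    refine integral_mono (bi _ hψm hψb)
      ((bi _ hψ0meas hψ001).add ((hUi.const_mul _).sub (hVi.const_mul _))) fun ω => ?_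
    obtain ⟨h1, h2⟩ := hψ001 ω
    have hUω : Z ω * U ω ≤ a * U ω := by
      simp only [hU, Set.indicator, Set.mem_ofPred_eq]
      split_ifs <;> nlinarith
    have hVω : b * V ω ≤ Z ω * V ω := by
      simp only [hV, Set.indicator, Set.mem_ofPred_eq]
      split_ifs <;> nlinarith
    have := mul_le_mul_of_nonneg_left hUω he0
    have := mul_le_mul_of_nonneg_left hVω hd0
    show Z ω * (ψ0 ω + (e * U ω - d * V ω)) ≤ Z ω * ψ0 ω + (e * a * U ω - d * b * V ω)
    nlinarith
  have hψi2 : Integrable (fun ω => e * a * U ω - d * b * V ω) μ :=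
    (hUi.const_mul _).sub (hVi.const_mul _)
  rw [integral_add (bi _ hψ0meas hψ001) hψi2,
    integral_sub (hUi.const_mul _) (hVi.const_mul _), integral_const_mul, integral_const_mul] at hle
  have := hopt _ hψm hψb (by linarith)
  rw [integral_add h0i hψi, integral_sub (hUi.const_mul _) (hVi.const_mul _),
    integral_const_mul, integral_const_mul] at this
  linarith

/-- Lemma A.6(b) (Neyman–Pearson converse): a `[0,1]`-valued test that is optimal in
the sense of Lemma A.6(a) must be of threshold form. -/
theorem neyman_pearson_converse {Ω : Type*} [MeasurableSpace Ω]
    (μ : Measure Ω) [IsProbabilityMeasure μ]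
    (Z : Ω → ℝ) (hZmeas : Measurable Z) (hZnn : ∀ ω, 0 ≤ Z ω)
    (hZint : ∫ ω, Z ω ∂μ = 1)
    (ν : Measure Ω) (hν : ν = μ.withDensity (fun ω => ENNReal.ofReal (Z ω)))
    (ψ0 : Ω → ℝ) (hψ0meas : Measurable ψ0)
    (hψ001 : ∀ ω, 0 ≤ ψ0 ω ∧ ψ0 ω ≤ 1)
    (hopt : ∀ ψ : Ω → ℝ, Measurable ψ → (∀ ω, 0 ≤ ψ ω ∧ ψ ω ≤ 1) →
      ∫ ω, ψ ω ∂ν ≤ ∫ ω, ψ0 ω ∂ν → ∫ ω, ψ ω ∂μ ≤ ∫ ω, ψ0 ω ∂μ) :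
    ∃ c : ENNReal,
      (∀ᵐ ω ∂μ, c * ENNReal.ofReal (Z ω) < 1 → ψ0 ω = 1) ∧
      (∀ᵐ ω ∂μ, 1 < c * ENNReal.ofReal (Z ω) → ψ0 ω = 0) := by
  have hZi : Integrable Z μ := by
    by_contra hn
    rw [integral_undef hn] at hZint
    norm_num at hZint
  have hνi : ∀ ψ : Ω → ℝ, ∫ ω, ψ ω ∂ν = ∫ ω, Z ω * ψ ω ∂μ := by
    intro ψ
    rw [hν, integral_withDensity_eq_integral_toReal_smul (by fun_prop)
      (Filter.Eventually.of_forall fun ω => ENNReal.ofReal_lt_top)]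
    simp [ENNReal.toReal_ofReal (hZnn _)]
  simp only [hνi] at hopt
  have h0i : Integrable ψ0 μ :=
    Integrable.of_bound hψ0meas.aestronglyMeasurable 1
      (Filter.Eventually.of_forall fun ω => by
        rw [Real.norm_eq_abs, abs_le]; constructor <;> linarith [(hψ001 ω).1, (hψ001 ω).2])
  have mA : ∀ a, MeasurableSet {ω | Z ω ≤ a} := fun a => measurableSet_le hZmeas measurable_const
  have mB : ∀ b, MeasurableSet {ω | b ≤ Z ω} := fun b => measurableSet_le measurable_const hZmeas
  have key : ∀ a b : ℝ, a < b → ∀ e d : ℝ, 0 ≤ e → e ≤ 1 → 0 ≤ d → d ≤ 1 →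
      e * a * (∫ ω, {ω | Z ω ≤ a}.indicator (fun ω => 1 - ψ0 ω) ω ∂μ) ≤
        d * b * (∫ ω, {ω | b ≤ Z ω}.indicator (fun ω => ψ0 ω) ω ∂μ) →
      e * (∫ ω, {ω | Z ω ≤ a}.indicator (fun ω => 1 - ψ0 ω) ω ∂μ) ≤
        d * (∫ ω, {ω | b ≤ Z ω}.indicator (fun ω => ψ0 ω) ω ∂μ) := by
    intro a b hab e d h1 h2 h3 h4 h
    exact np_swap μ Z hZmeas hZnn hZi ψ0 hψ0meas hψ001 hopt a b hab _ _ rfl rfl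
      (((integrable_const 1).sub h0i).indicator (mA a)) (h0i.indicator (mB b))
      ((measurable_const.sub hψ0meas).indicator (mA a)) (hψ0meas.indicator (mB b))
      e d h1 h2 h3 h4 h
  have nnU : ∀ a, 0 ≤ ({ω | Z ω ≤ a}.indicator (fun ω => 1 - ψ0 ω)) := fun a =>
    Set.indicator_nonneg fun ω _ => sub_nonneg.2 (hψ001 ω).2
  have nnV : ∀ b, 0 ≤ ({ω | b ≤ Z ω}.indicator (fun ω => ψ0 ω)) := fun b =>
    Set.indicator_nonneg fun ω _ => (hψ001 ω).1
  have hP : ∀ a, (∫ ω, {ω | Z ω ≤ a}.indicator (fun ω => 1 - ψ0 ω) ω ∂μ) ≤ 0 →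
      ∀ᵐ ω ∂μ, Z ω ≤ a → ψ0 ω = 1 := by
    intro a h
    have h' := (integral_eq_zero_iff_of_nonneg (nnU a)
      (((integrable_const 1).sub h0i).indicator (mA a))).1 (le_antisymm h (integral_nonneg (nnU a)))
    filter_upwards [h'] with ω hω hz
    simp only [Set.indicator, Set.mem_ofPred_eq, hz, if_true, Pi.zero_apply] at hω
    linarith
  have hQ : ∀ b, (∫ ω, {ω | b ≤ Z ω}.indicator (fun ω => ψ0 ω) ω ∂μ) ≤ 0 →
      ∀ᵐ ω ∂μ, b ≤ Z ω → ψ0 ω = 0 := by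
    intro b h
    have h' := (integral_eq_zero_iff_of_nonneg (nnV b)
      (h0i.indicator (mB b))).1 (le_antisymm h (integral_nonneg (nnV b)))
    filter_upwards [h'] with ω hω hz
    simpa only [Set.indicator, Set.mem_ofPred_eq, hz, if_true, Pi.zero_apply] using hω
  have P0 : ∀ᵐ ω ∂μ, Z ω ≤ 0 → ψ0 ω = 1 := by
    apply hP
    have := key 0 1 one_pos 1 0 (by norm_num) (by norm_num) (by norm_num) (by norm_num) (by simp)
    linarith
  have PQ : ∀ a b : ℝ, 0 ≤ a → a < b →
      (∀ᵐ ω ∂μ, Z ω ≤ a → ψ0 ω = 1) ∨ (∀ᵐ ω ∂μ, b ≤ Z ω → ψ0 ω = 0) := by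
    intro a b ha hab
    by_contra hcon0
    have hcon := not_or.1 hcon0
    have hu := not_le.1 (fun h => hcon.1 (hP a h))
    have hv := not_le.1 (fun h => hcon.2 (hQ b h))
    have K := key a b hab
    generalize (∫ ω, {ω | Z ω ≤ a}.indicator (fun ω => 1 - ψ0 ω) ω ∂μ) = u at *
    generalize (∫ ω, {ω | b ≤ Z ω}.indicator (fun ω => ψ0 ω) ω ∂μ) = v at *
    have hb : 0 < b := ha.trans_lt hab
    have hk : 0 < min u v := lt_min hu hv
    have hku := min_le_left u v
    have hkv := min_le_right u v
    generalize min u v = k at *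
    have := K (k / u) (k / v * (a / b)) (by positivity) ((div_le_one hu).2 hku) (by positivity)
      (mul_le_one₀ ((div_le_one hv).2 hkv) (by positivity) ((div_le_one hb).2 hab.le))
      (le_of_eq (by field_simp))
    have e1 : k / u * u = k := by field_simp
    have e2 : k / v * (a / b) * v = k * (a / b) := by field_simp
    rw [e1, e2] at this
    have : a / b < 1 := (div_lt_one hb).2 hab
    nlinarith
  set S : Set ℝ := {a | 0 ≤ a ∧ ∀ᵐ ω ∂μ, Z ω ≤ a → ψ0 ω = 1} with hS
  have hS0 : (0 : ℝ) ∈ S := ⟨le_rfl, P0⟩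
  have hdown : ∀ a ∈ S, ∀ q : ℝ, q ≤ a → ∀ᵐ ω ∂μ, Z ω ≤ q → ψ0 ω = 1 := by
    intro a ha q hq
    filter_upwards [ha.2] with ω h hz using h (hz.trans hq)
  by_cases hbd : BddAbove S
  · have ht0 : 0 ≤ sSup S := le_csSup hbd hS0
    have L : ∀ᵐ ω ∂μ, Z ω < sSup S → ψ0 ω = 1 := by
      have : ∀ᵐ ω ∂μ, ∀ q : ℚ, (q : ℝ) < sSup S → Z ω ≤ q → ψ0 ω = 1 := by
        rw [ae_all_iff]
        intro q
        by_cases hq : (q : ℝ) < sSup S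
        · obtain ⟨a, ha, hqa⟩ := exists_lt_of_lt_csSup ⟨0, hS0⟩ hq
          filter_upwards [hdown a ha q hqa.le] with ω h _ using h
        · exact Filter.Eventually.of_forall fun ω h => absurd h hq
      filter_upwards [this] with ω h hz
      obtain ⟨q, h1, h2⟩ := exists_rat_btwn hz
      exact h q h2 h1.le
    have R : ∀ᵐ ω ∂μ, sSup S < Z ω → ψ0 ω = 0 := by
      have : ∀ᵐ ω ∂μ, ∀ q : ℚ, sSup S < (q : ℝ) → q ≤ Z ω → ψ0 ω = 0 := by
        rw [ae_all_iff]
        intro q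
        by_cases hq : sSup S < (q : ℝ)
        · obtain ⟨a, h1, h2⟩ := exists_between hq
          have ha : 0 ≤ a := ht0.trans h1.le
          rcases PQ a q ha h2 with h | h
          · exact absurd (le_csSup hbd (show a ∈ S from ⟨ha, h⟩)) (not_le.2 h1)
          · filter_upwards [h] with ω h _ using h
        · exact Filter.Eventually.of_forall fun ω h => absurd h hq
      filter_upwards [this] with ω h hz
      obtain ⟨q, h1, h2⟩ := exists_rat_btwn hz
      exact h q h1 h2.le
    rcases ht0.eq_or_lt with ht | ht
    · refine ⟨⊤, ?_, ?_⟩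
      · filter_upwards [P0] with ω h hz
        by_contra hn
        have h1 : 0 < Z ω := not_le.1 fun h' => hn (h h')
        rw [ENNReal.top_mul (by simpa using h1)] at hz
        simp at hz
      · filter_upwards [R] with ω h hz
        apply h
        rw [← ht]
        by_contra hn
        rw [ENNReal.ofReal_of_nonpos (not_lt.1 hn)] at hz
        simp at hz
    · refine ⟨ENNReal.ofReal (sSup S)⁻¹, ?_, ?_⟩
      · filter_upwards [L] with ω h hz
        apply h
        rw [← ENNReal.ofReal_mul (by positivity), ENNReal.ofReal_lt_one,
          inv_mul_lt_iff₀ ht, mul_one] at hz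
        exact hz
      · filter_upwards [R] with ω h hz
        apply h
        rw [← ENNReal.ofReal_mul (by positivity), ENNReal.one_lt_ofReal,
          lt_inv_mul_iff₀ ht, mul_one] at hz
        exact hz
  · refine ⟨0, ?_, by simp⟩
    have : ∀ᵐ ω ∂μ, ∀ n : ℕ, Z ω ≤ n → ψ0 ω = 1 := by
      rw [ae_all_iff]
      intro n
      obtain ⟨a, ha, hna⟩ := not_bddAbove_iff.1 hbd n
      exact hdown a ha n hna.le
    filter_upwards [this] with ω h _
    obtain ⟨n, hn⟩ := exists_nat_ge (Z ω)
    exact h n hn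
end

section
/- Let μ be a probability measure on Ω, X : Ω → ℝ a bounded measurable function, and α ∈ (0,1). Let q := sInf {s ∈ ℝ | μ{X ≤ s} ≥ α} be the lower α-quantile of X, and define ε := 0 if μ{X = q} = 0 and ε := (α − μ{X < q}) / μ{X = q} otherwise (all measure values taken as reals). Then ε ∈ [0,1], the function Z* := (1/α)(1_{X < q} + ε · 1_{X = q}) satisfies 0 ≤ Z* ≤ 1/α pointwise, and ∫ Z* dμ = 1. -/
open MeasureTheory

/-- Theorem A.7 (part 1): the candidate extreme density
`Z* = (1/α)(1_{X<q} + ε·1_{X=q})` is a valid density: `ε ∈ [0,1]`,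
`0 ≤ Z* ≤ 1/α`, and `∫ Z* dμ = 1`. -/
theorem avar_extreme_density {Ω : Type*} [MeasurableSpace Ω]
    (μ : Measure Ω) [IsProbabilityMeasure μ]
    (X : Ω → ℝ) (hXmeas : Measurable X) (hXb : ∃ C, ∀ ω, |X ω| ≤ C)
    (α : ℝ) (hα : α ∈ Set.Ioo (0:ℝ) 1)
    (q : ℝ) (hq : q = sInf {s : ℝ | α ≤ (μ {ω | X ω ≤ s}).toReal})
    (ε : ℝ)
    (hε : ε = if (μ {ω | X ω = q}).toReal = 0 then 0
              else (α - (μ {ω | X ω < q}).toReal) / (μ {ω | X ω = q}).toReal)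
    (Zstar : Ω → ℝ)
    (hZstar : Zstar = fun ω => (1/α) * (({ω | X ω < q} : Set Ω).indicator 1 ω
                + ε * ({ω | X ω = q} : Set Ω).indicator 1 ω)) :
    ε ∈ Set.Icc (0:ℝ) 1 ∧ (∀ ω, 0 ≤ Zstar ω ∧ Zstar ω ≤ 1/α) ∧
      ∫ ω, Zstar ω ∂μ = 1 := by
  obtain ⟨C, hC⟩ := hXb
  obtain ⟨hα0, hα1⟩ := hα
  have hmem : ∀ s, q < s → α ≤ (μ {ω | X ω ≤ s}).toReal := by
    intro s hs
    have hne : ({s : ℝ | α ≤ (μ {ω | X ω ≤ s}).toReal}).Nonempty := by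
      refine ⟨C, ?_⟩
      have : {ω | X ω ≤ C} = Set.univ := by
        ext ω; simpa using (abs_le.1 (hC ω)).2
      simp only [Set.mem_ofPred_eq, this, measure_univ, ENNReal.toReal_one]
      exact hα1.le
    rw [hq] at hs
    obtain ⟨t, ht, hts⟩ := exists_lt_of_csInf_lt hne hs
    refine le_trans ht (ENNReal.toReal_mono (measure_ne_top _ _) (measure_mono ?_))
    intro ω hω
    exact le_trans hω hts.le
  have hbdd : BddBelow {s : ℝ | α ≤ (μ {ω | X ω ≤ s}).toReal} := by
    refine ⟨-C, ?_⟩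
    intro s hs
    by_contra hlt
    push Not at hlt
    have : {ω | X ω ≤ s} = ∅ := by
      ext ω
      simpa using lt_of_lt_of_le hlt (abs_le.1 (hC ω)).1
    simp only [Set.mem_ofPred_eq, this, measure_empty, ENNReal.toReal_zero] at hs
    linarith
  have hnot : ∀ s, s < q → (μ {ω | X ω ≤ s}).toReal ≤ α := by
    intro s hs
    by_contra h
    push Not at h
    have h2 : q ≤ s := hq ▸ csInf_le hbdd h.le
    linarith
  have hmeasle : ∀ s, MeasurableSet {ω | X ω ≤ s} := fun s => measurableSet_le hXmeas measurable_const
  have hmlt : MeasurableSet {ω | X ω < q} := measurableSet_lt hXmeas measurable_const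
  have hmeq : MeasurableSet {ω | X ω = q} := hXmeas (measurableSet_singleton q)
  have k1 : (μ {ω | X ω < q}).toReal ≤ α := by
    have hU : {ω | X ω < q} = ⋃ n : ℕ, {ω | X ω ≤ q - 1 / ((n : ℝ) + 1)} := by
      ext ω
      simp only [Set.mem_ofPred_eq, Set.mem_iUnion]
      constructor
      · intro h
        obtain ⟨n, hn⟩ := exists_nat_one_div_lt (sub_pos.2 h)
        exact ⟨n, by linarith⟩
      · rintro ⟨n, hn⟩
        have : 0 < 1 / ((n : ℝ) + 1) := Nat.one_div_pos_of_nat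
        linarith
    have hmono : Monotone fun n : ℕ => {ω | X ω ≤ q - 1 / ((n : ℝ) + 1)} := by
      intro m n hmn ω hω
      have : 1 / ((n : ℝ) + 1) ≤ 1 / ((m : ℝ) + 1) := Nat.one_div_le_one_div hmn
      simp only [Set.mem_ofPred_eq] at hω ⊢
      linarith
    have ht := tendsto_measure_iUnion_atTop (μ := μ) hmono
    rw [← hU] at ht
    refine le_of_tendsto ((ENNReal.tendsto_toReal (measure_ne_top _ _)).comp ht)
      (Filter.Eventually.of_forall fun n => hnot _ ?_)
    have : 0 < 1 / ((n : ℝ) + 1) := Nat.one_div_pos_of_nat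
    linarith
  have k2 : α ≤ (μ {ω | X ω ≤ q}).toReal := by
    have hU : {ω | X ω ≤ q} = ⋂ n : ℕ, {ω | X ω ≤ q + 1 / ((n : ℝ) + 1)} := by
      ext ω
      simp only [Set.mem_ofPred_eq, Set.mem_iInter]
      constructor
      · intro h n
        have : 0 < 1 / ((n : ℝ) + 1) := Nat.one_div_pos_of_nat
        linarith
      · intro h
        by_contra hlt
        push Not at hlt
        obtain ⟨n, hn⟩ := exists_nat_one_div_lt (sub_pos.2 hlt)
        have := h n
        linarith
    have hmono : Antitone fun n : ℕ => {ω | X ω ≤ q + 1 / ((n : ℝ) + 1)} := by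
      intro m n hmn ω hω
      have : 1 / ((n : ℝ) + 1) ≤ 1 / ((m : ℝ) + 1) := Nat.one_div_le_one_div hmn
      simp only [Set.mem_ofPred_eq] at hω ⊢
      linarith
    have ht := tendsto_measure_iInter_atTop (μ := μ)
      (fun n : ℕ => (hmeasle (q + 1 / ((n : ℝ) + 1))).nullMeasurableSet) hmono
      ⟨0, measure_ne_top _ _⟩
    rw [← hU] at ht
    refine ge_of_tendsto ((ENNReal.tendsto_toReal (measure_ne_top _ _)).comp ht)
      (Filter.Eventually.of_forall fun n => hmem _ ?_)
    have : 0 < 1 / ((n : ℝ) + 1) := Nat.one_div_pos_of_nat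
    linarith
  have hsum : (μ {ω | X ω ≤ q}).toReal = (μ {ω | X ω < q}).toReal + (μ {ω | X ω = q}).toReal := by
    rw [← ENNReal.toReal_add (measure_ne_top _ _) (measure_ne_top _ _), ← measure_union _ hmeq]
    · congr 2
      ext ω
      simp [le_iff_lt_or_eq]
    · rw [Set.disjoint_left]
      intro ω h1 h2
      exact (ne_of_lt h1) h2
  have hp0 : 0 ≤ (μ {ω | X ω = q}).toReal := ENNReal.toReal_nonneg
  have hεI : ε ∈ Set.Icc (0:ℝ) 1 := by
    rw [hε]
    split_ifs with h
    · simp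
    · have hp : 0 < (μ {ω | X ω = q}).toReal := lt_of_le_of_ne hp0 (Ne.symm h)
      exact ⟨div_nonneg (by linarith) hp0, (div_le_one hp).2 (by linarith)⟩
  have hεm : (μ {ω | X ω < q}).toReal + ε * (μ {ω | X ω = q}).toReal = α := by
    rw [hε]
    split_ifs with h
    · linarith
    · rw [div_mul_cancel₀ _ h]; ring
  refine ⟨hεI, ?_, ?_⟩
  · intro ω
    have hb : 0 ≤ (({ω | X ω < q} : Set Ω).indicator 1 ω
                + ε * ({ω | X ω = q} : Set Ω).indicator 1 ω) ∧ (({ω | X ω < q} : Set Ω).indicator 1 ω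
                + ε * ({ω | X ω = q} : Set Ω).indicator 1 ω) ≤ 1 := by
      obtain ⟨h0, h1⟩ := hεI
      rcases lt_trichotomy (X ω) q with h | h | h
      · simp [Set.indicator, h, h.ne]
      · simp [Set.indicator, h, h0, h1]
      · simp [Set.indicator, h.not_gt, h.ne']
    have hi : 0 < 1 / α := by positivity
    rw [hZstar]
    exact ⟨mul_nonneg hi.le hb.1, mul_le_of_le_one_right hi.le hb.2⟩
  · have i1 : Integrable (({ω | X ω < q} : Set Ω).indicator (1 : Ω → ℝ)) μ :=
      (integrable_const (1:ℝ)).indicator hmlt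
    have i2 : Integrable (({ω | X ω = q} : Set Ω).indicator (1 : Ω → ℝ)) μ :=
      (integrable_const (1:ℝ)).indicator hmeq
    rw [hZstar, integral_const_mul, integral_add i1 (i2.const_mul ε), integral_const_mul,
      integral_indicator_one hmlt, integral_indicator_one hmeq]
    simp only [Measure.real]
    rw [hεm]
    field_simp
end

section
/- Let μ be a probability measure on Ω, X : Ω → ℝ a bounded measurable function, and α ∈ (0,1). With q the lower α-quantile of X, ε the associated atom weight, and Z* := (1/α)(1_{X < q} + ε · 1_{X = q}), the density Z* maximizes the expected loss among all admissible densities: for every measurable Z : Ω → ℝ with 0 ≤ Z ≤ 1/α μ-a.e. and ∫ Z dμ = 1, one has ∫ (−X) · Z dμ ≤ ∫ (−X) · Z* dμ. Consequently the supremum sup { ∫ (−X) · Z dμ | Z measurable, 0 ≤ Z ≤ 1/α, ∫ Z dμ = 1 } is attained at Z*. -/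
open MeasureTheory

/-- Theorem A.7 (part 2): the extreme density `Z*` maximizes the expected loss
`∫ (−X)·Z dμ` over all densities `Z` with `0 ≤ Z ≤ 1/α` and `∫ Z dμ = 1`;
in particular the supremum in the robust representation of `AVaR_α` is attained at `Z*`. -/
theorem avar_robust_maximizer {Ω : Type*} [MeasurableSpace Ω]
    (μ : Measure Ω) [IsProbabilityMeasure μ]
    (X : Ω → ℝ) (hXmeas : Measurable X) (hXb : ∃ C, ∀ ω, |X ω| ≤ C)
    (α : ℝ) (hα : α ∈ Set.Ioo (0:ℝ) 1)
    (q : ℝ) (hq : q = sInf {s : ℝ | α ≤ (μ {ω | X ω ≤ s}).toReal})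
    (ε : ℝ)
    (hε : ε = if (μ {ω | X ω = q}).toReal = 0 then 0
              else (α - (μ {ω | X ω < q}).toReal) / (μ {ω | X ω = q}).toReal)
    (Zstar : Ω → ℝ)
    (hZstar : Zstar = fun ω => (1/α) * (({ω | X ω < q} : Set Ω).indicator 1 ω
                + ε * ({ω | X ω = q} : Set Ω).indicator 1 ω)) :
    (∀ Z : Ω → ℝ, Measurable Z → (∀ᵐ ω ∂μ, 0 ≤ Z ω ∧ Z ω ≤ 1/α) →
        ∫ ω, Z ω ∂μ = 1 →
        ∫ ω, (-X ω) * Z ω ∂μ ≤ ∫ ω, (-X ω) * Zstar ω ∂μ) ∧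
    IsGreatest {r : ℝ | ∃ Z : Ω → ℝ, Measurable Z ∧ (∀ ω, 0 ≤ Z ω ∧ Z ω ≤ 1/α) ∧
        ∫ ω, Z ω ∂μ = 1 ∧ r = ∫ ω, (-X ω) * Z ω ∂μ}
      (∫ ω, (-X ω) * Zstar ω ∂μ) := by
  obtain ⟨C, hC⟩ := hXb
  obtain ⟨hα0, hα1⟩ := hα
  have hmono : ∀ s t : ℝ, s ≤ t → (μ {ω | X ω ≤ s}).toReal ≤ (μ {ω | X ω ≤ t}).toReal := by
    intro s t hst
    exact ENNReal.toReal_mono (measure_ne_top _ _) (measure_mono fun ω h => le_trans h hst)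
  have hbdd : BddBelow {s : ℝ | α ≤ (μ {ω | X ω ≤ s}).toReal} := by
    refine ⟨-C, fun s hs => ?_⟩
    by_contra hlt
    push Not at hlt
    have he : {ω | X ω ≤ s} = ∅ := by
      ext ω
      simp only [Set.mem_setOf_eq, Set.mem_empty_iff_false, iff_false, not_le]
      have := (abs_le.1 (hC ω)).1
      linarith
    simp only [Set.mem_setOf_eq, he, measure_empty, ENNReal.toReal_zero] at hs
    linarith
  have hne : {s : ℝ | α ≤ (μ {ω | X ω ≤ s}).toReal}.Nonempty := by
    refine ⟨C, ?_⟩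
    have he : {ω | X ω ≤ C} = Set.univ := by
      ext ω
      simpa using (abs_le.1 (hC ω)).2
    simp only [Set.mem_setOf_eq, he, measure_univ, ENNReal.toReal_one]
    linarith
  have hmle : MeasurableSet {ω | X ω ≤ q} := measurableSet_le hXmeas measurable_const
  have hmlt : MeasurableSet {ω | X ω < q} := measurableSet_lt hXmeas measurable_const
  have hmeq : MeasurableSet {ω | X ω = q} := measurableSet_eq_fun hXmeas measurable_const
  have h1 : α ≤ (μ {ω | X ω ≤ q}).toReal := by
    have hI : {ω | X ω ≤ q} = ⋂ n : ℕ, {ω | X ω ≤ q + 1 / ((n : ℝ) + 1)} := by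
      ext ω
      simp only [Set.mem_setOf_eq, Set.mem_iInter]
      constructor
      · intro h n
        have : (0 : ℝ) < 1 / ((n : ℝ) + 1) := by positivity
        linarith
      · intro h
        by_contra hlt
        push Not at hlt
        obtain ⟨n, hn⟩ := exists_nat_one_div_lt (sub_pos.2 hlt)
        have := h n
        linarith
    have ht : Filter.Tendsto (fun n : ℕ => μ {ω | X ω ≤ q + 1 / ((n : ℝ) + 1)}) Filter.atTop
        (nhds (μ {ω | X ω ≤ q})) := by
      rw [hI]
      refine tendsto_measure_iInter_atTop
        (fun n => (measurableSet_le hXmeas measurable_const).nullMeasurableSet) ?_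
        ⟨0, measure_ne_top _ _⟩
      intro m n hmn ω h
      have h' : (1 : ℝ) / ((n : ℝ) + 1) ≤ 1 / ((m : ℝ) + 1) := Nat.one_div_le_one_div hmn
      simp only [Set.mem_setOf_eq] at h ⊢
      linarith
    have ht' := (ENNReal.tendsto_toReal (measure_ne_top μ {ω | X ω ≤ q})).comp ht
    refine ge_of_tendsto' ht' fun n => ?_
    have hpos : (0 : ℝ) < 1 / ((n : ℝ) + 1) := by positivity
    have hlt : sInf {s : ℝ | α ≤ (μ {ω | X ω ≤ s}).toReal} < q + 1 / ((n : ℝ) + 1) := by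
      rw [← hq]; linarith
    obtain ⟨s, hs, hsl⟩ := exists_lt_of_csInf_lt hne hlt
    exact le_trans hs (hmono _ _ hsl.le)
  have h2 : (μ {ω | X ω < q}).toReal ≤ α := by
    have hI : {ω | X ω < q} = ⋃ n : ℕ, {ω | X ω ≤ q - 1 / ((n : ℝ) + 1)} := by
      ext ω
      simp only [Set.mem_setOf_eq, Set.mem_iUnion]
      constructor
      · intro h
        obtain ⟨n, hn⟩ := exists_nat_one_div_lt (sub_pos.2 h)
        exact ⟨n, by linarith⟩
      · rintro ⟨n, h⟩
        have : (0 : ℝ) < 1 / ((n : ℝ) + 1) := by positivity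
        linarith
    have ht : Filter.Tendsto (fun n : ℕ => μ {ω | X ω ≤ q - 1 / ((n : ℝ) + 1)}) Filter.atTop
        (nhds (μ {ω | X ω < q})) := by
      rw [hI]
      refine tendsto_measure_iUnion_atTop ?_
      intro m n hmn ω h
      have h' : (1 : ℝ) / ((n : ℝ) + 1) ≤ 1 / ((m : ℝ) + 1) := Nat.one_div_le_one_div hmn
      simp only [Set.mem_setOf_eq] at h ⊢
      change X ω ≤ _ at h
      change X ω ≤ _
      linarith
    have ht' := (ENNReal.tendsto_toReal (measure_ne_top μ {ω | X ω < q})).comp ht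
    refine le_of_tendsto' ht' fun n => ?_
    have hpos : (0 : ℝ) < 1 / ((n : ℝ) + 1) := by positivity
    by_contra hlt
    push Not at hlt
    have := csInf_le hbdd (show q - 1 / ((n : ℝ) + 1) ∈ _ from hlt.le)
    rw [← hq] at this
    linarith
  have h3 : (μ {ω | X ω ≤ q}).toReal = (μ {ω | X ω < q}).toReal + (μ {ω | X ω = q}).toReal := by
    have hU : {ω | X ω ≤ q} = {ω | X ω < q} ∪ {ω | X ω = q} := by
      ext ω
      simp [le_iff_lt_or_eq]
    rw [hU, measure_union _ hmeq, ENNReal.toReal_add (measure_ne_top _ _) (measure_ne_top _ _)]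
    rw [Set.disjoint_left]
    intro ω h h'
    exact (ne_of_lt h) h'
  have hp0 : 0 ≤ (μ {ω | X ω = q}).toReal := ENNReal.toReal_nonneg
  have hmass : (μ {ω | X ω < q}).toReal + ε * (μ {ω | X ω = q}).toReal = α := by
    rw [hε]
    split_ifs with h
    · rw [h] at h3 ⊢
      linarith
    · field_simp
      ring
  have hε01 : 0 ≤ ε ∧ ε ≤ 1 := by
    rw [hε]
    split_ifs with h
    · simp
    · have hp : 0 < (μ {ω | X ω = q}).toReal := lt_of_le_of_ne hp0 (Ne.symm h)
      exact ⟨div_nonneg (by linarith) hp0, (div_le_one hp).2 (by linarith)⟩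
  have hia : 0 < 1 / α := by positivity
  have hlt' : ∀ ω, X ω < q → Zstar ω = 1 / α := by
    intro ω h
    simp [hZstar, h, h.ne]
  have heq' : ∀ ω, X ω = q → Zstar ω = 1 / α * ε := by
    intro ω h
    simp [hZstar, h]
  have hgt' : ∀ ω, q < X ω → Zstar ω = 0 := by
    intro ω h
    simp [hZstar, h.ne', not_lt.2 h.le]
  have hZb : ∀ ω, 0 ≤ Zstar ω ∧ Zstar ω ≤ 1 / α := by
    intro ω
    rcases lt_trichotomy (X ω) q with h | h | h
    · rw [hlt' ω h]; exact ⟨hia.le, le_rfl⟩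
    · rw [heq' ω h]
      exact ⟨mul_nonneg hia.le hε01.1, mul_le_of_le_one_right hia.le hε01.2⟩
    · rw [hgt' ω h]; exact ⟨le_rfl, hia.le⟩
  have hZm : Measurable Zstar := by
    rw [hZstar]
    exact ((measurable_one.indicator hmlt).add
      ((measurable_one.indicator hmeq).const_mul ε)).const_mul (1 / α)
  have hZint : ∫ ω, Zstar ω ∂μ = 1 := by
    rw [hZstar, integral_const_mul, integral_add, integral_const_mul,
      integral_indicator_one hmlt, integral_indicator_one hmeq]
    · rw [measureReal_def, measureReal_def, hmass]
      field_simp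
    · exact (integrable_const (1 : ℝ)).indicator hmlt
    · exact ((integrable_const (1 : ℝ)).indicator hmeq).const_mul ε
  have key : ∀ Z : Ω → ℝ, Measurable Z → (∀ᵐ ω ∂μ, 0 ≤ Z ω ∧ Z ω ≤ 1/α) →
        ∫ ω, Z ω ∂μ = 1 →
        ∫ ω, (-X ω) * Z ω ∂μ ≤ ∫ ω, (-X ω) * Zstar ω ∂μ := by
    intro Z hm hb hi
    have hint : ∀ Y : Ω → ℝ, Measurable Y → (∀ᵐ ω ∂μ, 0 ≤ Y ω ∧ Y ω ≤ 1/α) → Integrable Y μ := by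
      intro Y hY hYb
      refine Integrable.of_bound hY.aestronglyMeasurable (1 / α) ?_
      filter_upwards [hYb] with ω h
      rw [Real.norm_eq_abs, abs_of_nonneg h.1]
      exact h.2
    have hint2 : ∀ Y : Ω → ℝ, Integrable Y μ → Integrable (fun ω => (-X ω) * Y ω) μ := by
      intro Y hY
      refine hY.bdd_mul (c := C) hXmeas.neg.aestronglyMeasurable ?_
      exact Filter.Eventually.of_forall fun ω => by simpa using hC ω
    have iZ := hint Z hm hb
    have iS := hint Zstar hZm (Filter.Eventually.of_forall hZb)
    have hle : ∫ ω, ((-X ω) * Z ω + q * Z ω) ∂μ ≤ ∫ ω, ((-X ω) * Zstar ω + q * Zstar ω) ∂μ := by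
      refine integral_mono_ae ((hint2 Z iZ).add (iZ.const_mul q))
        ((hint2 Zstar iS).add (iS.const_mul q)) ?_
      filter_upwards [hb] with ω h
      rcases lt_trichotomy (X ω) q with hx | hx | hx
      · rw [hlt' ω hx]
        nlinarith [h.2]
      · rw [hx]; linarith
      · rw [hgt' ω hx]
        nlinarith [h.1]
    rw [integral_add (hint2 Z iZ) (iZ.const_mul q),
      integral_add (hint2 Zstar iS) (iS.const_mul q), integral_const_mul, integral_const_mul,
      hi, hZint] at hle
    linarith
  refine ⟨key, ⟨Zstar, hZm, hZb, hZint, rfl⟩, ?_⟩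
  rintro r ⟨Z, hm, hb, hi, rfl⟩
  exact key Z hm (Filter.Eventually.of_forall hb) hi
end

section
/- Let μ be a probability measure on Ω, X : Ω → ℝ a bounded measurable function, and α ∈ (0,1). With q the lower α-quantile of X, ε the associated atom weight, and Z* := (1/α)(1_{X < q} + ε · 1_{X = q}), the extreme expected loss equals the tail average of quantiles: ∫ (−X) · Z* dμ = (1/α) ∫_{(0,α)} ( − q⁻_u(X) ) du, where the integral on the right is with respect to Lebesgue measure in u and q⁻_u(X) := sInf {s ∈ ℝ | μ{X ≤ s} ≥ u} is the lower u-quantile of X. -/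
open MeasureTheory

open Set Filter Topology ProbabilityTheory in
theorem avar_aux_key (F : StieltjesFunction ℝ) (C : ℝ) (h0 : ∀ s, s < -C → F s = 0)
    (h1 : F C = 1) (u : ℝ) (hu0 : 0 < u) (hu1 : u < 1) (s : ℝ) :
    sInf {s : ℝ | u ≤ F s} ≤ s ↔ u ≤ F s := by
  have hbdd : BddBelow {s : ℝ | u ≤ F s} := by
    refine ⟨-C, fun x hx => ?_⟩
    by_contra! h
    have := h0 x h
    have hx' : u ≤ F x := hx
    linarith
  have hne : ({s : ℝ | u ≤ F s}).Nonempty := ⟨C, by simp only [mem_setOf_eq]; linarith⟩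
  constructor
  · intro h
    have h2 : u ≤ F (sInf {s : ℝ | u ≤ F s}) := by
      have ht : Tendsto F (𝓝[>] (sInf {s : ℝ | u ≤ F s})) (𝓝 (F (sInf {s : ℝ | u ≤ F s}))) :=
        (F.right_continuous _).tendsto.mono_left (nhdsWithin_mono _ Ioi_subset_Ici_self)
      refine ge_of_tendsto ht ?_
      filter_upwards [self_mem_nhdsWithin] with x hx
      obtain ⟨y, hy, hyx⟩ := (csInf_lt_iff hbdd hne).1 hx
      exact le_trans hy (F.mono hyx.le)
    exact h2.trans (F.mono h)
  · intro h
    exact csInf_le hbdd h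

open Set Filter Topology ProbabilityTheory in
/-- Theorem A.7 (part 3): the extreme expected loss equals the Average Value at Risk,
i.e. the tail average of the lower quantiles:
`∫ (−X)·Z* dμ = (1/α) ∫_{(0,α)} (−q⁻_u(X)) du`. -/
theorem avar_extreme_value {Ω : Type*} [MeasurableSpace Ω]
    (μ : Measure Ω) [IsProbabilityMeasure μ]
    (X : Ω → ℝ) (hXmeas : Measurable X) (hXb : ∃ C, ∀ ω, |X ω| ≤ C)
    (α : ℝ) (hα : α ∈ Set.Ioo (0:ℝ) 1)
    (q : ℝ) (hq : q = sInf {s : ℝ | α ≤ (μ {ω | X ω ≤ s}).toReal})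
    (ε : ℝ)
    (hε : ε = if (μ {ω | X ω = q}).toReal = 0 then 0
              else (α - (μ {ω | X ω < q}).toReal) / (μ {ω | X ω = q}).toReal)
    (Zstar : Ω → ℝ)
    (hZstar : Zstar = fun ω => (1/α) * (({ω | X ω < q} : Set Ω).indicator 1 ω
                + ε * ({ω | X ω = q} : Set Ω).indicator 1 ω)) :
    ∫ ω, (-X ω) * Zstar ω ∂μ
      = (1/α) * ∫ u in Set.Ioo (0:ℝ) α,
          (-(sInf {s : ℝ | u ≤ (μ {ω | X ω ≤ s}).toReal})) := by
  obtain ⟨C, hC⟩ := hXb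
  obtain ⟨hα0, hα1⟩ := hα
  haveI : IsProbabilityMeasure (μ.map X) := Measure.isProbabilityMeasure_map hXmeas.aemeasurable
  set F := cdf (μ.map X) with hF
  have hFs : ∀ s, (μ {ω | X ω ≤ s}).toReal = F s := by
    intro s
    rw [hF, cdf_eq_real, Measure.real, Measure.map_apply hXmeas measurableSet_Iic]
    rfl
  simp only [hFs] at hq ⊢
  have h0 : ∀ s, s < -C → F s = 0 := by
    intro s hs
    rw [← hFs]
    have : {ω | X ω ≤ s} = ∅ := by
      ext ω
      simp only [mem_setOf_eq, mem_empty_iff_false, iff_false, not_le]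
      linarith [(abs_le.1 (hC ω)).1]
    simp [this]
  have h1 : F C = 1 := by
    rw [← hFs]
    have : {ω | X ω ≤ C} = univ := by
      ext ω
      simp only [mem_setOf_eq, mem_univ, iff_true]
      exact (abs_le.1 (hC ω)).2
    simp [this]
  have key := avar_aux_key F C h0 h1
  set Q : ℝ → ℝ := fun u => sInf {s : ℝ | u ≤ F s} with hQ
  change q = Q α at hq
  change _ = (1/α) * ∫ u in Set.Ioo (0:ℝ) α, -(Q u)
  have key' : ∀ u, 0 < u → u < 1 → ∀ s, Q u ≤ s ↔ u ≤ F s := key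
  have hqF : ∀ s, q ≤ s ↔ α ≤ F s := by rw [hq]; exact key' α hα0 hα1
  have hQmono : MonotoneOn Q (Ioo 0 α) := by
    intro u hu v hv huv
    rw [key' u hu.1 (hu.2.trans hα1)]
    exact huv.trans ((key' v hv.1 (hv.2.trans hα1) _).1 le_rfl)
  have hQle : ∀ u ∈ Ioo 0 α, Q u ≤ q := by
    intro u hu
    rw [key' u hu.1 (hu.2.trans hα1)]
    exact hu.2.le.trans ((hqF q).1 le_rfl)
  have hQge : ∀ u ∈ Ioo 0 α, -C ≤ Q u := by
    intro u hu
    by_contra! h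
    have h2 := (key' u hu.1 (hu.2.trans hα1) _).1 le_rfl
    rw [h0 _ h] at h2
    exact absurd hu.1 (not_lt.2 h2)
  have hQint : IntegrableOn Q (Ioo 0 α) := by
    refine Integrable.of_bound
      (aemeasurable_restrict_of_monotoneOn measurableSet_Ioo hQmono).aestronglyMeasurable
      (max |q| |C|) ?_
    filter_upwards [ae_restrict_mem measurableSet_Ioo] with u hu
    rw [Real.norm_eq_abs, abs_le]
    constructor
    · have := hQge u hu
      have h3 := le_max_right |q| |C|
      have := le_abs_self C
      linarith
    · exact (hQle u hu).trans ((le_abs_self q).trans (le_max_left _ _))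
  have hXint : Integrable X μ :=
    Integrable.of_bound hXmeas.aestronglyMeasurable C (ae_of_all _ hC)
  -- layer cake on both sides
  have hL : ∫ u in Ioo 0 α, (q - Q u) = ∫ t in Ioi (0:ℝ), F (q - t) := by
    have hi : Integrable (fun u => q - Q u) (volume.restrict (Ioo 0 α)) :=
      (integrable_const q).sub hQint
    rw [hi.integral_eq_integral_meas_le]
    · refine setIntegral_congr_fun measurableSet_Ioi ?_
      intro t ht
      have ht0 : (0:ℝ) < t := ht
      have hlt : F (q - t) < α := by
        by_contra! h
        have := (hqF _).2 h
        linarith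
      have hnn : 0 ≤ F (q - t) := by rw [← hFs]; exact ENNReal.toReal_nonneg
      have hset : {u | t ≤ q - Q u} ∩ Ioo 0 α = Ioc 0 (F (q - t)) := by
        ext u
        simp only [mem_inter_iff, mem_setOf_eq, mem_Ioo, mem_Ioc]
        constructor
        · rintro ⟨h, hu⟩
          exact ⟨hu.1, (key' u hu.1 (hu.2.trans hα1) _).1 (by linarith)⟩
        · rintro ⟨hu0, hu⟩
          have := (key' u hu0 (by linarith) _).2 hu
          exact ⟨by linarith, hu0, by linarith⟩
      simp only [Measure.real]
      rw [Measure.restrict_apply' measurableSet_Ioo, hset, Real.volume_Ioc, sub_zero,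
        ENNReal.toReal_ofReal hnn]
    · filter_upwards [ae_restrict_mem measurableSet_Ioo] with u hu
      simpa using hQle u hu
  have hmlt : MeasurableSet {ω | X ω < q} := measurableSet_lt hXmeas measurable_const
  have hmeq : MeasurableSet {ω | X ω = q} := hXmeas (measurableSet_singleton q)
  have hgi : Integrable ({ω | X ω < q}.indicator (fun ω => q - X ω)) μ :=
    ((integrable_const q).sub hXint).indicator hmlt
  have hR : ∫ ω, {ω | X ω < q}.indicator (fun ω => q - X ω) ω ∂μ
      = ∫ t in Ioi (0:ℝ), F (q - t) := by
    rw [hgi.integral_eq_integral_meas_le]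
    · refine setIntegral_congr_fun measurableSet_Ioi ?_
      intro t ht
      have ht0 : (0:ℝ) < t := ht
      simp only [Measure.real]
      rw [← hFs]
      congr 2
      ext ω
      simp only [mem_setOf_eq, indicator]
      split_ifs with h
      · constructor <;> intro <;> linarith
      · constructor <;> intro <;> linarith
    · refine ae_of_all _ fun ω => ?_
      simp only [Pi.zero_apply]
      refine indicator_nonneg (fun ω hω => ?_) ω
      have : X ω < q := hω
      linarith
  have hsum : F q = (μ {ω | X ω < q}).toReal + (μ {ω | X ω = q}).toReal := by
    rw [← hFs, ← ENNReal.toReal_add (measure_ne_top _ _) (measure_ne_top _ _),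
      ← measure_union _ hmeq]
    · congr 2
      ext ω
      simp [le_iff_lt_or_eq]
    · rw [Set.disjoint_left]
      intro ω h h'
      exact absurd h' (ne_of_lt h)
  have hltα : (μ {ω | X ω < q}).toReal ≤ α := by
    have e : μ {ω | X ω < q} = (μ.map X) (Iio q) := by
      rw [Measure.map_apply hXmeas measurableSet_Iio]; rfl
    rw [e, ← measure_cdf (μ.map X), StieltjesFunction.measure_Iio _ (tendsto_cdf_atBot _), sub_zero]
    refine ENNReal.toReal_le_of_le_ofReal hα0.le (ENNReal.ofReal_le_ofReal ?_)
    refine le_of_tendsto (F.mono.tendsto_leftLim q) ?_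
    filter_upwards [self_mem_nhdsWithin] with x hx
    by_contra! h
    exact absurd ((hqF x).2 h.le) (not_le.2 hx)
  have hεm : ε * (μ {ω | X ω = q}).toReal = α - (μ {ω | X ω < q}).toReal := by
    rw [hε]
    have := (hqF q).1 le_rfl
    split_ifs with h
    · rw [h] at hsum ⊢; linarith
    · field_simp
  have hpt : ∀ ω, (-X ω) * Zstar ω = (1/α) * ({ω | X ω < q}.indicator (fun ω => q - X ω) ω
      - q * ({ω | X ω < q}.indicator 1 ω) - q * ε * ({ω | X ω = q}.indicator 1 ω)) := by
    intro ω
    rw [hZstar]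
    rcases lt_trichotomy (X ω) q with h | h | h
    · simp [indicator, h, h.ne]; ring
    · simp [indicator, h]; ring
    · simp [indicator, h.not_gt, h.ne']
  simp_rw [hpt]
  have i1 : Integrable ({ω | X ω < q}.indicator (1 : Ω → ℝ)) μ :=
    (integrable_const (1:ℝ)).indicator hmlt
  have i2 : Integrable ({ω | X ω = q}.indicator (1 : Ω → ℝ)) μ :=
    (integrable_const (1:ℝ)).indicator hmeq
  have i3 : Integrable (fun a => {ω | X ω < q}.indicator (fun ω => q - X ω) a
      - q * {ω | X ω < q}.indicator (1 : Ω → ℝ) a) μ := hgi.sub (i1.const_mul q)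
  rw [integral_const_mul, integral_sub i3 (i2.const_mul (q * ε)),
    integral_sub hgi (i1.const_mul q), integral_const_mul, integral_const_mul,
    integral_indicator_one hmlt, integral_indicator_one hmeq, hR, ← hL,
    integral_sub (integrable_const q) hQint, integral_neg]
  simp only [Measure.real]
  rw [mul_assoc q, hεm]
  simp [hα0.le]
  ring
end
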